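/- arXiv:2212.04796 — 4 statements merged into one kernel-verified Lean document; each statement's English description precedes it below -/
import Mathlib

section
/- Let V be a real Hilbert space, ν > 0, M ≥ 0, N ≥ 0. Let a : V × V → ℝ be a bilinear map with a(v,v) ≥ ν‖v‖² and |a(u,v)| ≤ M‖u‖‖v‖ for all u, v ∈ V; let c̃ : V × V × V → ℝ be a trilinear map with c̃(u,w,w) = 0 for all u, w ∈ V and |c̃(u,v,w)| ≤ N‖u‖‖v‖‖w‖ for all u, v, w ∈ V; let F : V → ℝ be a continuous linear functional with operator norm ‖F‖. If N·‖F‖/ν² < 1, then there exists exactly one y ∈ V such that a(y,v) + c̃(y,y,v) = F(v) for all v ∈ V, and this y satisfies ‖y‖ ≤ ‖F‖/ν. -/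
/-!
Write the nonlinear problem as `A y y = F` with `A w = a + ct w`. Since `ct w v v = 0`, every form
`A w` is coercive with the same constant `ν`, so `A w u = F` has a Lax–Milgram solution `u = S w`,
and `‖S w‖ ≤ ‖F‖ / ν`. The difference of two such solutions satisfies
`A w₁ (S w₁ - S w₂) = -(A w₁ - A w₂) (S w₂)`, so `S` is Lipschitz with constant `N ‖F‖ / ν²`.
The smallness condition makes `S` a contraction, and its fixed points are exactly the solutions of
the nonlinear problem.
-/

-- At the default depth no norm is found on `D →L[𝕜] E →L[𝕜] F →L[𝕜] G`; Mathlib itself uses 3.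
set_option maxSynthPendingDepth 3

open scoped NNReal

section Trilinear

variable {𝕜 D E F G : Type*} [NontriviallyNormedField 𝕜]
  [SeminormedAddCommGroup D] [NormedSpace 𝕜 D] [SeminormedAddCommGroup E] [NormedSpace 𝕜 E]
  [SeminormedAddCommGroup F] [NormedSpace 𝕜 F] [SeminormedAddCommGroup G] [NormedSpace 𝕜 G]

/-- The continuous trilinear map with underlying trilinear map `f`, given the bound
`‖f x y z‖ ≤ C * ‖x‖ * ‖y‖ * ‖z‖`; the trilinear analogue of `LinearMap.mkContinuous₂`. -/
noncomputable def mkContinuous₃ (f : D →ₗ[𝕜] E →ₗ[𝕜] F →ₗ[𝕜] G) (C : ℝ≥0)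
    (hf : ∀ x y z, ‖f x y z‖ ≤ C * ‖x‖ * ‖y‖ * ‖z‖) : D →L[𝕜] E →L[𝕜] F →L[𝕜] G :=
  LinearMap.mkContinuous
    { toFun := fun x => (f x).mkContinuous₂ (C * ‖x‖) (hf x)
      map_add' := fun x₁ x₂ => by ext; simp
      map_smul' := fun c x => by ext; simp }
    C fun x => (f x).mkContinuous₂_norm_le (by positivity) (hf x)

@[simp]
theorem mkContinuous₃_apply (f : D →ₗ[𝕜] E →ₗ[𝕜] F →ₗ[𝕜] G) {C : ℝ≥0}
    (hf : ∀ x y z, ‖f x y z‖ ≤ C * ‖x‖ * ‖y‖ * ‖z‖) (x : D) (y : E) (z : F) :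
    mkContinuous₃ f C hf x y z = f x y z :=
  rfl

theorem lipschitzWith_mkContinuous₃ (f : D →ₗ[𝕜] E →ₗ[𝕜] F →ₗ[𝕜] G) {C : ℝ≥0}
    (hf : ∀ x y z, ‖f x y z‖ ≤ C * ‖x‖ * ‖y‖ * ‖z‖) : LipschitzWith C (mkContinuous₃ f C hf) :=
  ContinuousLinearMap.lipschitzWith_of_opNorm_le (LinearMap.mkContinuous_norm_le _ C.2 _)

end Trilinear

section CoerciveEstimates

variable {E : Type*} [SeminormedAddCommGroup E] [NormedSpace ℝ E] {ν : ℝ}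

theorem norm_le_div_of_mul_norm_sq_le_apply (hν : 0 < ν) {f : E →L[ℝ] ℝ} {u : E}
    (h : ν * ‖u‖ ^ 2 ≤ f u) : ‖u‖ ≤ ‖f‖ / ν := by
  rw [le_div_iff₀' hν]
  rcases (norm_nonneg u).eq_or_lt with hu | hu
  · simp [← hu]
  · refine le_of_mul_le_mul_right ?_ hu
    calc ν * ‖u‖ * ‖u‖ = ν * ‖u‖ ^ 2 := by ring
      _ ≤ f u := h
      _ ≤ ‖f‖ * ‖u‖ := (le_abs_self _).trans (f.le_opNorm u)

theorem norm_sub_le_of_coercive_of_apply_eq_apply (hν : 0 < ν) {B₁ B₂ : E →L[ℝ] E →L[ℝ] ℝ}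
    (hB₁ : ∀ v, ν * ‖v‖ ^ 2 ≤ B₁ v v) {u₁ u₂ : E} (hu : B₁ u₁ = B₂ u₂) :
    ‖u₁ - u₂‖ ≤ ‖B₁ - B₂‖ * ‖u₂‖ / ν := by
  have h_diff : B₁ (u₁ - u₂) = -((B₁ - B₂) u₂) := by
    rw [map_sub, hu, sub_apply, neg_sub]
  calc ‖u₁ - u₂‖ ≤ ‖(B₁ - B₂) u₂‖ / ν := by
        simpa only [h_diff, norm_neg] using norm_le_div_of_mul_norm_sq_le_apply hν (hB₁ (u₁ - u₂))
    _ ≤ ‖B₁ - B₂‖ * ‖u₂‖ / ν := by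
        gcongr
        exact (B₁ - B₂).le_opNorm u₂

theorem dist_le_of_coercive_of_lipschitzWith_of_apply_eq {W : Type*} [PseudoMetricSpace W]
    (hν : 0 < ν) {N : ℝ≥0} {A : W → E →L[ℝ] E →L[ℝ] ℝ}
    (hA_coer : ∀ w v, ν * ‖v‖ ^ 2 ≤ A w v v) (hA_lip : LipschitzWith N A)
    {F : E →L[ℝ] ℝ} {w₁ w₂ : W} {u₁ u₂ : E} (hu₁ : A w₁ u₁ = F) (hu₂ : A w₂ u₂ = F) :
    dist u₁ u₂ ≤ N * ‖F‖ / ν ^ 2 * dist w₁ w₂ := by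
  have hu₂_norm : ‖u₂‖ ≤ ‖F‖ / ν :=
    hu₂ ▸ norm_le_div_of_mul_norm_sq_le_apply hν (hA_coer w₂ u₂)
  have hA_norm : ‖A w₁ - A w₂‖ ≤ N * dist w₁ w₂ := by
    simpa only [dist_eq_norm] using hA_lip.dist_le_mul w₁ w₂
  calc dist u₁ u₂ = ‖u₁ - u₂‖ := dist_eq_norm u₁ u₂
    _ ≤ ‖A w₁ - A w₂‖ * ‖u₂‖ / ν :=
        norm_sub_le_of_coercive_of_apply_eq_apply hν (hA_coer w₁) (hu₁.trans hu₂.symm)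
    _ ≤ N * dist w₁ w₂ * (‖F‖ / ν) / ν := by gcongr
    _ = N * ‖F‖ / ν ^ 2 * dist w₁ w₂ := by ring

end CoerciveEstimates

section HilbertSpace

variable {V : Type*} [NormedAddCommGroup V] [InnerProductSpace ℝ V] [CompleteSpace V]

theorem exists_apply_eq_of_isCoercive {B : V →L[ℝ] V →L[ℝ] ℝ} (hB : IsCoercive B)
    (F : V →L[ℝ] ℝ) : ∃ u, B u = F := by
  refine ⟨hB.continuousLinearEquivOfBilin.symm ((InnerProductSpace.toDual ℝ V).symm F), ?_⟩
  ext v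
  rw [← hB.continuousLinearEquivOfBilin_apply, ContinuousLinearEquiv.apply_symm_apply,
    InnerProductSpace.toDual_symm_apply]

theorem stmt_3_general {ν : ℝ} (hν : 0 < ν) {N : ℝ≥0} {A : V → V →L[ℝ] V →L[ℝ] ℝ}
    (hA_coer : ∀ w v, ν * ‖v‖ ^ 2 ≤ A w v v) (hA_lip : LipschitzWith N A)
    (F : V →L[ℝ] ℝ) (hsmall : N * ‖F‖ / ν ^ 2 < 1) :
    ∃ y, A y y = F ∧ ‖y‖ ≤ ‖F‖ / ν ∧ ∀ z, A z z = F → z = y := by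
  have hA_isCoercive (w : V) : IsCoercive (A w) :=
    ⟨ν, hν, fun v => by simpa only [pow_two, mul_assoc] using hA_coer w v⟩
  choose S hS using fun w => exists_apply_eq_of_isCoercive (hA_isCoercive w) F
  have hS_unique {w u : V} (hu : A w u = F) : S w = u := by
    simpa using dist_le_of_coercive_of_lipschitzWith_of_apply_eq hν hA_coer hA_lip (hS w) hu
  have hS_contracting : ContractingWith ⟨N * ‖F‖ / ν ^ 2, by positivity⟩ S :=
    ⟨hsmall, LipschitzWith.of_dist_le_mul fun w₁ w₂ =>
      dist_le_of_coercive_of_lipschitzWith_of_apply_eq hν hA_coer hA_lip (hS w₁) (hS w₂)⟩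
  obtain ⟨y, hy⟩ : ∃ y, S y = y := ⟨_, hS_contracting.fixedPoint_isFixedPt⟩
  have hy_sol : A y y = F := by simpa only [hy] using hS y
  exact ⟨y, hy_sol, hy_sol ▸ norm_le_div_of_mul_norm_sq_le_apply hν (hA_coer y y),
    fun z hz => hS_contracting.fixedPoint_unique' (hS_unique hz) hy⟩

end HilbertSpace

/-- Existence and uniqueness for the abstract steady Navier–Stokes problem
in a real Hilbert space, under the smallness condition `N·‖F‖/ν² < 1`. -/
theorem stmt_3 (V : Type*) [NormedAddCommGroup V] [InnerProductSpace ℝ V] [CompleteSpace V]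
    (ν M N : ℝ) (hν : 0 < ν) (hM : 0 ≤ M) (hN : 0 ≤ N)
    (a : V →ₗ[ℝ] V →ₗ[ℝ] ℝ)
    (ha_coer : ∀ v, ν * ‖v‖ ^ 2 ≤ a v v)
    (ha_bdd : ∀ u v, |a u v| ≤ M * ‖u‖ * ‖v‖)
    (ct : V →ₗ[ℝ] V →ₗ[ℝ] V →ₗ[ℝ] ℝ)
    (hct_skew : ∀ u w, ct u w w = 0)
    (hct_bdd : ∀ u v w, |ct u v w| ≤ N * ‖u‖ * ‖v‖ * ‖w‖)
    (F : V →L[ℝ] ℝ)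
    (hsmall : N * ‖F‖ / ν ^ 2 < 1) :
    ∃ y : V, (∀ v, a y v + ct y y v = F v) ∧ ‖y‖ ≤ ‖F‖ / ν ∧
      ∀ z : V, (∀ v, a z v + ct z z v = F v) → z = y := by
  lift N to ℝ≥0 using hN
  let A (w : V) : V →L[ℝ] V →L[ℝ] ℝ := a.mkContinuous₂ M ha_bdd + mkContinuous₃ ct N hct_bdd w
  have hA_coer (w v : V) : ν * ‖v‖ ^ 2 ≤ A w v v := by simpa [A, hct_skew] using ha_coer v
  have hA_lip : LipschitzWith N A := by
    simpa using (LipschitzWith.const _).add (lipschitzWith_mkContinuous₃ ct hct_bdd)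
  simpa [A, ContinuousLinearMap.ext_iff] using stmt_3_general hν hA_coer hA_lip F hsmall
end

section
/- Let V be a real normed vector space, ν > 0, N ≥ 0, f ≥ 0 with N·f < ν². Let a : V × V → ℝ be a bilinear map with a(v,v) ≥ ν‖v‖² for all v ∈ V; let c̃ : V × V × V → ℝ be a trilinear map with c̃(u,w,w) = 0 for all u, w ∈ V and |c̃(u,v,w)| ≤ N‖u‖‖v‖‖w‖ for all u, v, w ∈ V; let F : V → ℝ be a linear map with |F(v)| ≤ f‖v‖ for all v ∈ V. If y, z ∈ V both satisfy a(y,v) + c̃(y,y,v) = F(v) and a(z,v) + c̃(z,z,v) = F(v) for all v ∈ V, then y = z. -/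
/-!
Testing the equation for `y` with `y` itself kills the trilinear term, and coercivity gives
`ν‖y‖ ≤ f`. For two solutions with difference `d = y - z`, write
`c(y, y, d) - c(z, z, d) = c(d, y, d) + c(z, d, d)`, where the last term vanishes. Hence
`ν‖d‖² ≤ a(d, d) = -c(d, y, d) ≤ N‖y‖‖d‖²`, and `‖d‖ ≠ 0` would force `ν² ≤ N(ν‖y‖) ≤ Nf`.
-/

/-- The variational form of the abstract steady Navier–Stokes equation: `y` satisfies
`a(y, v) + c(y, y, v) = F(v)` for every test vector `v`. The right-hand side `F` is a
bare function: the equation itself forces it to be linear. -/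
def IsSteadySolution {R V M : Type*} [CommSemiring R] [AddCommMonoid V] [Module R V]
    [AddCommMonoid M] [Module R M] (a : V →ₗ[R] V →ₗ[R] M) (c : V →ₗ[R] V →ₗ[R] V →ₗ[R] M)
    (F : V → M) (y : V) : Prop :=
  ∀ v, a y v + c y y v = F v

namespace IsSteadySolution

theorem apply_sub_sub_eq_neg {R V M : Type*} [CommSemiring R] [AddCommGroup V] [Module R V]
    [AddCommGroup M] [Module R M] {a : V →ₗ[R] V →ₗ[R] M} {c : V →ₗ[R] V →ₗ[R] V →ₗ[R] M}
    {F : V → M} {y z : V} (hy : IsSteadySolution a c F y) (hz : IsSteadySolution a c F z)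
    (hc : c z (y - z) (y - z) = 0) :
    a (y - z) (y - z) = -c (y - z) y (y - z) := by
  set d := y - z
  have a_sub : a d d = a y d - a z d := a.map_sub₂ y z d
  have c_sub_left : c d y d = c y y d - c z y d :=
    LinearMap.congr_fun (c.map_sub₂ y z y) d
  have c_middle_eq : c z y d = c z z d := by
    rwa [← sub_eq_zero, ← LinearMap.sub_apply, ← map_sub]
  have equations_agree : a y d + c y y d = a z d + c z z d := (hy d).trans (hz d).symm
  rw [a_sub, c_sub_left, c_middle_eq, neg_sub, sub_eq_sub_iff_add_eq_add, equations_agree, add_comm]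

variable {R V : Type*} [CommSemiring R] [SeminormedAddCommGroup V] [Module R V] [Module R ℝ]
  {a : V →ₗ[R] V →ₗ[R] ℝ} {c : V →ₗ[R] V →ₗ[R] V →ₗ[R] ℝ} {F : V → ℝ} {y z : V} {ν N f : ℝ}

theorem mul_norm_le (hy : IsSteadySolution a c F y) (hf : 0 ≤ f)
    (ha : ν * ‖y‖ ^ 2 ≤ a y y) (hc : c y y y = 0) (hF : F y ≤ f * ‖y‖) :
    ν * ‖y‖ ≤ f := by
  have energy : ν * ‖y‖ * ‖y‖ ≤ f * ‖y‖ :=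
    calc ν * ‖y‖ * ‖y‖ = ν * ‖y‖ ^ 2 := by ring
      _ ≤ a y y := ha
      _ = F y := by rw [← hy y, hc, add_zero]
      _ ≤ f * ‖y‖ := hF
  obtain norm_zero | norm_pos := (norm_nonneg y).eq_or_lt
  · rwa [← norm_zero, mul_zero]
  · exact le_of_mul_le_mul_right energy norm_pos

theorem mul_norm_sub_sq_le (hy : IsSteadySolution a c F y) (hz : IsSteadySolution a c F z)
    (ha : ν * ‖y - z‖ ^ 2 ≤ a (y - z) (y - z)) (hc : c z (y - z) (y - z) = 0)
    (hc_bdd : |c (y - z) y (y - z)| ≤ N * ‖y - z‖ * ‖y‖ * ‖y - z‖) :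
    ν * ‖y - z‖ ^ 2 ≤ N * ‖y‖ * ‖y - z‖ ^ 2 :=
  calc ν * ‖y - z‖ ^ 2 ≤ a (y - z) (y - z) := ha
    _ = -c (y - z) y (y - z) := hy.apply_sub_sub_eq_neg hz hc
    _ ≤ |c (y - z) y (y - z)| := neg_le_abs _
    _ ≤ N * ‖y - z‖ * ‖y‖ * ‖y - z‖ := hc_bdd
    _ = N * ‖y‖ * ‖y - z‖ ^ 2 := by ring

end IsSteadySolution

theorem stmt_4_general {R V : Type*} [CommSemiring R] [SeminormedAddCommGroup V] [Module R V]
    [Module R ℝ] {ν N f : ℝ} (hν : 0 < ν) (hN : 0 ≤ N) (hf : 0 ≤ f) (hsmall : N * f < ν ^ 2)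
    {a : V →ₗ[R] V →ₗ[R] ℝ} (ha_coer : ∀ v, ν * ‖v‖ ^ 2 ≤ a v v)
    {c : V →ₗ[R] V →ₗ[R] V →ₗ[R] ℝ} (hc_skew : ∀ u w, c u w w = 0)
    (hc_bdd : ∀ u v w, |c u v w| ≤ N * ‖u‖ * ‖v‖ * ‖w‖)
    {F : V → ℝ} (hF : ∀ v, |F v| ≤ f * ‖v‖) {y z : V}
    (hy : IsSteadySolution a c F y) (hz : IsSteadySolution a c F z) :
    Inseparable y z := by
  rw [Metric.inseparable_iff, dist_eq_norm]
  by_contra norm_ne_zero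
  have apriori : ν * ‖y‖ ≤ f :=
    hy.mul_norm_le hf (ha_coer y) (hc_skew y y) ((le_abs_self _).trans (hF y))
  have difference : ν * ‖y - z‖ ^ 2 ≤ N * ‖y‖ * ‖y - z‖ ^ 2 :=
    hy.mul_norm_sub_sq_le hz (ha_coer _) (hc_skew _ _) (hc_bdd _ _ _)
  have coercivity_le : ν ≤ N * ‖y‖ := le_of_mul_le_mul_right difference (by positivity)
  refine hsmall.not_ge ?_
  calc ν ^ 2 = ν * ν := sq ν
    _ ≤ ν * (N * ‖y‖) := by gcongr
    _ = N * (ν * ‖y‖) := by ring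
    _ ≤ N * f := by gcongr

/-- Uniqueness for the abstract steady Navier–Stokes problem in a real normed
space under the smallness condition `N·f < ν²`. -/
theorem stmt_4 (V : Type*) [NormedAddCommGroup V] [NormedSpace ℝ V]
    (ν N f : ℝ) (hν : 0 < ν) (hN : 0 ≤ N) (hf : 0 ≤ f)
    (hsmall : N * f < ν ^ 2)
    (a : V →ₗ[ℝ] V →ₗ[ℝ] ℝ)
    (ha_coer : ∀ v, ν * ‖v‖ ^ 2 ≤ a v v)
    (ct : V →ₗ[ℝ] V →ₗ[ℝ] V →ₗ[ℝ] ℝ)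
    (hct_skew : ∀ u w, ct u w w = 0)
    (hct_bdd : ∀ u v w, |ct u v w| ≤ N * ‖u‖ * ‖v‖ * ‖w‖)
    (F : V →ₗ[ℝ] ℝ) (hF : ∀ v, |F v| ≤ f * ‖v‖)
    (y z : V)
    (hy : ∀ v, a y v + ct y y v = F v)
    (hz : ∀ v, a z v + ct z z v = F v) :
    y = z :=
  (stmt_4_general hν hN hf hsmall ha_coer hct_skew hct_bdd hF hy hz).eq
end

section
/- Let V be a real vector space, p, q : V → ℝ seminorms, ν > 0, f ≥ 0, ε > 0. Let a_ω, a_Ω : V × V → ℝ be bilinear maps with a_ω(v,v) ≥ ν·p(v)² and a_Ω(v,v) ≥ q(v)² for all v ∈ V; let c_ω, c_Ω : V × V × V → ℝ be trilinear maps with c_ω(u,w,w) = 0 and c_Ω(u,w,w) = 0 for all u, w ∈ V; let F : V → ℝ be linear with |F(v)| ≤ f·p(v) for all v ∈ V. If y ∈ V satisfies a_ω(y,v) + ε·a_Ω(y,v) + c_ω(y,y,v) + ε·c_Ω(y,y,v) = F(v) for all v ∈ V, then p(y) ≤ f/ν and √ε · q(y) ≤ f/√ν. -/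
/-!
Testing the equation with `y` itself removes the convective terms, and coercivity leaves the energy
inequality `ν * p y ^ 2 + ε * q y ^ 2 ≤ f * p y`. Dropping the second term bounds `p y`; absorbing
the right-hand side by Young's inequality `f * x ≤ ν * x ^ 2 + f ^ 2 / (4 * ν)` bounds `q y`, with a
gain of a factor `1 / 2`.
-/

theorem le_div_of_mul_sq_le_mul {K : Type*} [Field K] [LinearOrder K] [IsStrictOrderedRing K]
    {a b x : K} (ha : 0 < a) (hb : 0 ≤ b) (h : a * x ^ 2 ≤ b * x) : x ≤ b / a := by
  rcases le_or_gt x 0 with hx | hx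
  · exact hx.trans (div_nonneg hb ha.le)
  · rw [le_div_iff₀' ha]
    refine le_of_mul_le_mul_right ?_ hx
    rwa [mul_assoc, ← sq]

theorem sqrt_mul_le_half_of_mul_sq_add_mul_sq_le_mul {a b c x z : ℝ} (ha : 0 < a) (hb : 0 ≤ b)
    (hc : 0 ≤ c) (h : a * x ^ 2 + c * z ^ 2 ≤ b * x) : √c * z ≤ b / √a / 2 := by
  have young : 2 * x * (b / 2) ≤ a * x ^ 2 + a⁻¹ * (b / 2) ^ 2 := two_mul_le_add_mul_sq ha
  have sq_le : (√c * z) ^ 2 ≤ (b / √a / 2) ^ 2 := calc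
    (√c * z) ^ 2 = c * z ^ 2 := by rw [mul_pow, Real.sq_sqrt hc]
    _ ≤ a⁻¹ * (b / 2) ^ 2 := by linarith
    _ = (b / √a / 2) ^ 2 := by
      rw [div_pow, div_pow, div_pow, Real.sq_sqrt ha.le]
      ring
  exact le_of_abs_le (abs_le_of_sq_le_sq sq_le (by positivity))

/-- `y` solves the penalized equation. The subscript `ω` marks the forms on the physical domain, the
subscript `Ω` the penalization forms, weighted by `ε`. The forms are arbitrary functions because the
energy argument only evaluates them at the solution. -/
def IsPenalizedSolution {V : Type*} (ε : ℝ) (aω aΩ : V → V → ℝ) (cω cΩ : V → V → V → ℝ)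
    (F : V → ℝ) (y : V) : Prop :=
  ∀ v, aω y v + ε * aΩ y v + cω y y v + ε * cΩ y y v = F v

section PenalizedEquation

variable {V : Type*} {p q : V → ℝ} {ν f ε : ℝ} {aω aΩ : V → V → ℝ} {cω cΩ : V → V → V → ℝ}
  {F : V → ℝ} {y : V}

theorem IsPenalizedSolution.energy_le (hy : IsPenalizedSolution ε aω aΩ cω cΩ F y) (hε : 0 ≤ ε)
    (haω : ∀ v, ν * p v ^ 2 ≤ aω v v) (haΩ : ∀ v, q v ^ 2 ≤ aΩ v v)
    (hcω : ∀ v, cω v v v = 0) (hcΩ : ∀ v, cΩ v v v = 0) (hF : ∀ v, F v ≤ f * p v) :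
    ν * p y ^ 2 + ε * q y ^ 2 ≤ f * p y := calc
  ν * p y ^ 2 + ε * q y ^ 2 ≤ aω y y + ε * aΩ y y :=
    add_le_add (haω y) (mul_le_mul_of_nonneg_left (haΩ y) hε)
  _ = aω y y + ε * aΩ y y + cω y y y + ε * cΩ y y y := by simp only [hcω, hcΩ, mul_zero, add_zero]
  _ = F y := hy y
  _ ≤ f * p y := hF y

theorem stmt_5_general (hy : IsPenalizedSolution ε aω aΩ cω cΩ F y)
    (hν : 0 < ν) (hf : 0 ≤ f) (hε : 0 ≤ ε)
    (haω : ∀ v, ν * p v ^ 2 ≤ aω v v) (haΩ : ∀ v, q v ^ 2 ≤ aΩ v v)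
    (hcω : ∀ v, cω v v v = 0) (hcΩ : ∀ v, cΩ v v v = 0) (hF : ∀ v, F v ≤ f * p v) :
    p y ≤ f / ν ∧ √ε * q y ≤ f / √ν / 2 := by
  have energy : ν * p y ^ 2 + ε * q y ^ 2 ≤ f * p y := hy.energy_le hε haω haΩ hcω hcΩ hF
  have penalty_nonneg : 0 ≤ ε * q y ^ 2 := by positivity
  exact ⟨le_div_of_mul_sq_le_mul hν hf (by linarith),
    sqrt_mul_le_half_of_mul_sq_add_mul_sq_le_mul hν hf hε energy⟩

end PenalizedEquation

/-- A priori estimates for the penalized equation (Proposition 2.1 of the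
paper, estimates (2.2) and (2.3)), with seminorms `p` and `q` playing the roles of
`|·|_{1,ω}` and `‖·‖_{1,Ω}`. -/
theorem stmt_5 (V : Type*) [AddCommGroup V] [Module ℝ V]
    (p q : Seminorm ℝ V)
    (ν f ε : ℝ) (hν : 0 < ν) (hf : 0 ≤ f) (hε : 0 < ε)
    (aω aΩ : V →ₗ[ℝ] V →ₗ[ℝ] ℝ)
    (haω : ∀ v, ν * p v ^ 2 ≤ aω v v)
    (haΩ : ∀ v, q v ^ 2 ≤ aΩ v v)
    (cω cΩ : V →ₗ[ℝ] V →ₗ[ℝ] V →ₗ[ℝ] ℝ)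
    (hcω : ∀ u w, cω u w w = 0)
    (hcΩ : ∀ u w, cΩ u w w = 0)
    (F : V →ₗ[ℝ] ℝ) (hF : ∀ v, |F v| ≤ f * p v)
    (y : V)
    (heq : ∀ v, aω y v + ε * aΩ y v + cω y y v + ε * cΩ y y v = F v) :
    p y ≤ f / ν ∧ Real.sqrt ε * q y ≤ f / Real.sqrt ν := by
  have hy : IsPenalizedSolution ε (aω · ·) (aΩ · ·) (cω · · ·) (cΩ · · ·) F y := heq
  obtain ⟨hp, hq⟩ := stmt_5_general hy hν hf hε.le haω haΩ (fun v ↦ hcω v v) (fun v ↦ hcΩ v v)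
    fun v ↦ le_of_abs_le (hF v)
  exact ⟨hp, hq.trans (half_le_self (by positivity))⟩
end

section
/- Let m, n, k be natural numbers, K ⊆ ℝ^m a nonempty bounded set, J : ℝ^m × ℝ^n → ℝ lower semicontinuous and bounded from below, and C : ℝ^m × ℝ^n → ℝ^k continuous. Assume J is coercive in Y uniformly with respect to G ∈ K, i.e. for every M ∈ ℝ there exists R > 0 such that J(G, Y) ≥ M whenever G ∈ K and ‖Y‖ ≥ R. Assume the admissibility condition: there exists (Ĝ, Ŷ) with Ĝ ∈ K and C(Ĝ, Ŷ) = 0. Then there exists a pair (G̃, Ỹ) ∈ ℝ^m × ℝ^n with G̃ in the closure of K, C(G̃, Ỹ) = 0, and J(G̃, Ỹ) ≤ inf { J(G, Y) : G ∈ K, C(G, Y) = 0 }. -/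
/-!
Direct method. The feasible set `{(G, Y) | G ∈ K, C(G, Y) = 0}` need not be closed, since `K` need
not be. But a lower semicontinuous function that is coercive on a set takes, at some point of the
*closure* of that set, a value not exceeding any of its values on the set itself. In this closure
`G` lies in the closure of `K`, and `C(G, Y) = 0` persists by continuity. Since `G` ranges over a
relatively compact set, coercivity in `Y` alone already gives coercivity on the feasible set.
-/

open Filter Set

section TopologicalSpace

variable {X Y Z α : Type*} [TopologicalSpace X] [TopologicalSpace Y] [TopologicalSpace Z]

theorem exists_mem_closure_forall_le_of_eventually_cocompact [LinearOrder α] {f : X → α}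
    {s : Set X} {x₀ : X} (hf : LowerSemicontinuousOn f (closure s)) (hx₀ : x₀ ∈ s)
    (hcoer : ∀ᶠ x in cocompact X ⊓ 𝓟 s, f x₀ ≤ f x) :
    ∃ x ∈ closure s, ∀ y ∈ s, f x ≤ f y := by
  obtain ⟨t, ht, hle⟩ : ∃ t, IsCompact t ∧ ∀ x ∈ tᶜ, x ∈ s → f x₀ ≤ f x :=
    hasBasis_cocompact.eventually_iff.mp (eventually_inf_principal.mp hcoer)
  have hcompact : IsCompact (insert x₀ t ∩ closure s) :=
    (ht.insert x₀).inter_right isClosed_closure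
  have hx₀_mem : x₀ ∈ insert x₀ t ∩ closure s := ⟨mem_insert x₀ t, subset_closure hx₀⟩
  obtain ⟨x, ⟨-, hx⟩, hmin⟩ :=
    (hf.mono inter_subset_right).exists_isMinOn ⟨x₀, hx₀_mem⟩ hcompact
  refine ⟨x, hx, fun y hy => ?_⟩
  by_cases hyt : y ∈ t
  · exact hmin ⟨mem_insert_of_mem x₀ hyt, subset_closure hy⟩
  · exact (hmin hx₀_mem).trans (hle y hyt hy)

theorem tendsto_snd_cocompact_inf_principal_of_isCompact {K : Set X} (hK : IsCompact K) :
    Tendsto Prod.snd (cocompact (X × Y) ⊓ 𝓟 (Prod.fst ⁻¹' K)) (cocompact Y) := by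
  refine hasBasis_cocompact.tendsto_right_iff.mpr fun t ht => eventually_inf_principal.mpr ?_
  filter_upwards [(hK.prod ht).compl_mem_cocompact] with p hp hpK hpt
  exact hp ⟨hpK, hpt⟩

theorem closure_setOf_fst_mem_and_eq_subset [T1Space Z] {K : Set X} {C : X × Y → Z} {c : Z}
    (hC : Continuous C) :
    closure {p | p.1 ∈ K ∧ C p = c} ⊆ {p | p.1 ∈ closure K ∧ C p = c} :=
  closure_minimal (fun _ hp => ⟨subset_closure hp.1, hp.2⟩)
    ((isClosed_closure.preimage continuous_fst).inter (isClosed_singleton.preimage hC))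

theorem stmt_15_general [T1Space Z] [Zero Z] [ConditionallyCompleteLinearOrder α] {K : Set X}
    (hK : IsCompact (closure K)) {J : X → Y → α}
    (hJ : LowerSemicontinuous fun p : X × Y => J p.1 p.2) {C : X → Y → Z}
    (hC : Continuous fun p : X × Y => C p.1 p.2)
    (hcoer : ∀ M, ∀ᶠ y in cocompact Y, ∀ x ∈ K, M ≤ J x y)
    (hadm : ∃ x y, x ∈ K ∧ C x y = 0) :
    ∃ x y, x ∈ closure K ∧ C x y = 0 ∧ J x y ≤ sInf {r | ∃ x y, x ∈ K ∧ C x y = 0 ∧ r = J x y} := by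
  obtain ⟨x₀, y₀, hx₀, hC₀⟩ := hadm
  let feasible : Set (X × Y) := {p | p.1 ∈ K ∧ C p.1 p.2 = 0}
  have hfeasible_le : 𝓟 feasible ≤ 𝓟 (Prod.fst ⁻¹' closure K) :=
    principal_mono.mpr fun _ hp => subset_closure hp.1
  have htendsto : Tendsto Prod.snd (cocompact (X × Y) ⊓ 𝓟 feasible) (cocompact Y) :=
    (tendsto_snd_cocompact_inf_principal_of_isCompact hK).mono_left
      (inf_le_inf_left _ hfeasible_le)
  have hcoer_feasible : ∀ᶠ p in cocompact (X × Y) ⊓ 𝓟 feasible, J x₀ y₀ ≤ J p.1 p.2 := by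
    filter_upwards [htendsto.eventually (hcoer (J x₀ y₀)),
      mem_inf_of_right (mem_principal_self feasible)] with p hle hp
    exact hle p.1 hp.1
  obtain ⟨⟨x, y⟩, hxy, hmin⟩ := exists_mem_closure_forall_le_of_eventually_cocompact
    (x₀ := (x₀, y₀)) (hJ.lowerSemicontinuousOn (closure feasible)) ⟨hx₀, hC₀⟩ hcoer_feasible
  obtain ⟨hx, hCxy⟩ := closure_setOf_fst_mem_and_eq_subset hC hxy
  refine ⟨x, y, hx, hCxy, le_csInf ⟨_, x₀, y₀, hx₀, hC₀, rfl⟩ ?_⟩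
  rintro _ ⟨x', y', hx', hC', rfl⟩
  exact hmin (x', y') ⟨hx', hC'⟩

end TopologicalSpace

theorem eventually_cocompact_of_forall_le_norm {E : Type*} [SeminormedAddGroup E] [ProperSpace E]
    {p : E → Prop} {R : ℝ} (hp : ∀ y, R ≤ ‖y‖ → p y) : ∀ᶠ y in cocompact E, p y :=
  (tendsto_norm_cocompact_atTop.eventually_ge_atTop R).mono hp

/-- Convergence content of Proposition 3.3 ("Prop 3.a") of the paper:
with `K` nonempty and bounded, `J` lower semicontinuous, bounded from below and coercive
in `Y` uniformly in `G ∈ K`, `C` continuous, and the admissible set nonempty, there is a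
pair `(G̃, Ỹ)` with `G̃` in the closure of `K`, satisfying the constraint `C(G̃,Ỹ) = 0`,
whose cost does not exceed the infimum of `J` over the admissible set. -/
theorem stmt_15 (m n k : ℕ) (K : Set (EuclideanSpace ℝ (Fin m)))
    (hKne : K.Nonempty) (hKbd : Bornology.IsBounded K)
    (J : EuclideanSpace ℝ (Fin m) → EuclideanSpace ℝ (Fin n) → ℝ)
    (hJlsc : LowerSemicontinuous
      (fun p : EuclideanSpace ℝ (Fin m) × EuclideanSpace ℝ (Fin n) => J p.1 p.2))
    (hJbdd : ∃ B : ℝ, ∀ G Y, -B ≤ J G Y)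
    (C : EuclideanSpace ℝ (Fin m) → EuclideanSpace ℝ (Fin n) → EuclideanSpace ℝ (Fin k))
    (hC : Continuous
      (fun p : EuclideanSpace ℝ (Fin m) × EuclideanSpace ℝ (Fin n) => C p.1 p.2))
    (hcoer : ∀ M : ℝ, ∃ R : ℝ, 0 < R ∧ ∀ G Y, G ∈ K → R ≤ ‖Y‖ → M ≤ J G Y)
    (hadm : ∃ Ghat Yhat, Ghat ∈ K ∧ C Ghat Yhat = 0) :
    ∃ Gt Yt, Gt ∈ closure K ∧ C Gt Yt = 0 ∧
      J Gt Yt ≤ sInf {r : ℝ | ∃ G Y, G ∈ K ∧ C G Y = 0 ∧ r = J G Y} := by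
  exact stmt_15_general hKbd.isCompact_closure hJlsc hC (hadm := hadm) fun M =>
    let ⟨_, _, hM⟩ := hcoer M
    eventually_cocompact_of_forall_le_norm fun Y hY G hG => hM G Y hG hY
end
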